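/- The function (ρA, ρB) ↦ √(T_{C^Q}(ρA, ρB)) is a metric on the set Ω_2 of qubit density matrices: for all ρA, ρB, ρC ∈ Ω_2, √(T_{C^Q}(ρA,ρB)) = √(T_{C^Q}(ρB,ρA)) ≥ 0, √(T_{C^Q}(ρA,ρB)) = 0 if and only if ρA = ρB, and √(T_{C^Q}(ρA,ρC)) ≤ √(T_{C^Q}(ρA,ρB)) + √(T_{C^Q}(ρB,ρC)). -/

import Mathlib

open Matrix ComplexOrder

/-- A density matrix: positive semidefinite with trace one. -/
def IsDensityMatrix {k : Type*} [Fintype k] [DecidableEq k] (ρ : Matrix k k ℂ) : Prop :=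
  ρ.PosSemidef ∧ ρ.trace = 1

/-- Partial trace over the second factor. -/
noncomputable def trB {m n : ℕ} (R : Matrix (Fin m × Fin n) (Fin m × Fin n) ℂ) :
    Matrix (Fin m) (Fin m) ℂ :=
  Matrix.of fun i j => ∑ p, R (i, p) (j, p)

/-- Partial trace over the first factor. -/
noncomputable def trA {m n : ℕ} (R : Matrix (Fin m × Fin n) (Fin m × Fin n) ℂ) :
    Matrix (Fin n) (Fin n) ℂ :=
  Matrix.of fun p q => ∑ i, R (i, p) (i, q)

/-- The set of quantum couplings of two density matrices. -/
def QCouplings {m n : ℕ} (ρA : Matrix (Fin m) (Fin m) ℂ) (ρB : Matrix (Fin n) (Fin n) ℂ) :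
    Set (Matrix (Fin m × Fin n) (Fin m × Fin n) ℂ) :=
  {R | IsDensityMatrix R ∧ trB R = ρA ∧ trA R = ρB}

/-- The quantum optimal transport cost. -/
noncomputable def QOT {m n : ℕ} (C : Matrix (Fin m × Fin n) (Fin m × Fin n) ℂ)
    (ρA : Matrix (Fin m) (Fin m) ℂ) (ρB : Matrix (Fin n) (Fin n) ℂ) : ℝ :=
  sInf ((fun R => ((C * R).trace).re) '' QCouplings ρA ρB)

/-- The SWAP matrix on `Fin n × Fin n`. -/
noncomputable def swapM (n : ℕ) : Matrix (Fin n × Fin n) (Fin n × Fin n) ℂ :=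
  Matrix.of fun x y => if x.1 = y.2 ∧ x.2 = y.1 then 1 else 0

/-- The quantum cost matrix `C^Q = (1/2) (I - S)`. -/
noncomputable def CQ (n : ℕ) : Matrix (Fin n × Fin n) (Fin n × Fin n) ℂ :=
  (1 / 2 : ℂ) • (1 - swapM n)

/-- Kronecker product of square matrices indexed by `Fin m` and `Fin n`. -/
noncomputable def kron {m n : ℕ} (A : Matrix (Fin m) (Fin m) ℂ)
    (B : Matrix (Fin n) (Fin n) ℂ) : Matrix (Fin m × Fin n) (Fin m × Fin n) ℂ :=
  Matrix.of fun x y => A x.1 y.1 * B x.2 y.2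

/-!
Write `N_A(v) = √⟨v, A v⟩`. The metric axioms can be read off from the variational formula
`√2 · √(T(A, B)) = max {|N_A(v) - N_B(v)| : ‖v‖ = 1}`.

Decompose a coupling into vectorized matrices `Mₖ`. Its cost is `¼ ∑ₖ ‖Mₖ - Mₖᵀ‖²`, and its
marginals are `∑ₖ Mₖ Mₖᴴ` and `∑ₖ Mₖᵀ Mₖᵀᴴ`. Hence `N_A(eᵢ)` and `N_B(eᵢ)` are the norms of the
`i`-th rows of the families `(Mₖ)` and `(Mₖᵀ)`, and the `i`-th row of a skew-symmetric matrix
carries at most half of its squared Frobenius norm. Together with invariance under the congruences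
`Mₖ ↦ U Mₖ Uᵀ`, this shows that no cost is below the maximum, in any dimension.

For qubits the bound is attained. Rotate a maximizing `v` to `e₀` and put `p = N_A(e₀)`,
`q = N_B(e₀)`, where `q < p` after possibly exchanging `A` and `B`. The first-order condition at
`e₀` says that the first columns of `A` and `B` are `p (p, z)` and `q (q, z)` for a common `z`, so
`M₁ = [0, p; q, z]` and `M₂ = [0, 0; 0, s]` have marginals `A` and `B` and cost `(p - q)² / 2`,
provided that `s² = 1 - p² - q² - |z|²` is nonnegative. Maximality of the gap at `e₀` over its
value at `(z̄, -(p + q))` gives this nonnegativity.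
-/

section Ensembles

open scoped Matrix.Norms.Frobenius

variable {K m n : Type*}

/-- The Gram operator `∑ₖ |Mₖ⟩⟩⟨⟨Mₖ|` of the vectorized matrices `Mₖ`, by which an
ensemble of matrices encodes a coupling. -/
def vecGram [Fintype K] (M : K → Matrix m n ℂ) : Matrix (m × n) (m × n) ℂ :=
  ∑ k, vecMulVec (Function.uncurry (M k)) (star (Function.uncurry (M k)))

lemma vecGram_apply [Fintype K] (M : K → Matrix m n ℂ) (x y : m × n) :
    vecGram M x y = ∑ k, M k x.1 x.2 * star (M k y.1 y.2) := by
  simp [vecGram, Matrix.sum_apply, vecMulVec_apply, Function.uncurry]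

lemma vecGram_posSemidef [Fintype K] [Finite m] [Finite n] (M : K → Matrix m n ℂ) :
    (vecGram M).PosSemidef :=
  posSemidef_sum _ fun _ _ => posSemidef_vecMulVec_self_star _

lemma exists_eq_vecGram [Finite m] [Finite n] {R : Matrix (m × n) (m × n) ℂ} (hR : R.PosSemidef) :
    ∃ (r : ℕ) (M : Fin r → Matrix m n ℂ), R = vecGram M := by
  obtain ⟨r, v, rfl⟩ := posSemidef_iff_eq_sum_vecMulVec.mp hR
  exact ⟨r, fun k => Matrix.of (Function.curry (v k)), rfl⟩

variable [Fintype K] [Fintype m] [Fintype n]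

/-- The ensemble `M` has marginals `A` and `B`: these are the partial traces of `vecGram M`. -/
structure HasMarginals (M : K → Matrix m n ℂ) (A : Matrix m m ℂ) (B : Matrix n n ℂ) : Prop where
  left : ∑ k, M k * (M k)ᴴ = A
  right : ∑ k, (M k)ᵀ * (M k)ᵀᴴ = B

/-- The cost `Re tr(CQ R)` of the coupling `R = vecGram M`, as a sum of squared Frobenius norms of
the skew parts; see `re_trace_CQ_mul_vecGram`. -/
noncomputable def transportCost (M : K → Matrix n n ℂ) : ℝ :=
  (∑ k, ‖M k - (M k)ᵀ‖ ^ 2) / 4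

lemma HasMarginals.transpose {M : K → Matrix m n ℂ} {A : Matrix m m ℂ} {B : Matrix n n ℂ}
    (h : HasMarginals M A B) : HasMarginals (fun k => (M k)ᵀ) B A :=
  ⟨h.right, by simpa only [transpose_transpose] using h.left⟩

lemma transportCost_transpose (M : K → Matrix n n ℂ) :
    transportCost (fun k => (M k)ᵀ) = transportCost M := by
  simp only [transportCost, transpose_transpose, norm_sub_rev]

lemma frobenius_norm_sq (A : Matrix m n ℂ) : ‖A‖ ^ 2 = ∑ i, ∑ j, ‖A i j‖ ^ 2 := by
  rw [frobenius_norm_def, ← Real.sqrt_eq_rpow, Real.sq_sqrt (by positivity)]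
  simp only [Real.rpow_two]

lemma frobenius_norm_sq_eq_re_trace (A : Matrix m n ℂ) : ‖A‖ ^ 2 = (A * Aᴴ).trace.re := by
  simp [frobenius_norm_sq, trace, mul_apply, Complex.mul_conj, Complex.sq_norm]

lemma frobenius_norm_sub_transpose_sq (A : Matrix n n ℂ) :
    ‖A - Aᵀ‖ ^ 2 = 2 * ((A - Aᵀ) * Aᴴ).trace.re := by
  have hskew : ((A - Aᵀ) * Aᵀᴴ).trace = -((A - Aᵀ) * Aᴴ).trace := by
    rw [← trace_transpose, transpose_mul, trace_mul_comm, ← trace_neg, ← neg_mul, neg_sub,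
      transpose_sub, transpose_transpose, ← conjTranspose_transpose_eq_transpose_conjTranspose,
      transpose_transpose]
  rw [frobenius_norm_sq_eq_re_trace, conjTranspose_sub, mul_sub, trace_sub, hskew, sub_neg_eq_add,
    Complex.add_re, two_mul]

lemma trB_vecGram {a b : ℕ} (M : K → Matrix (Fin a) (Fin b) ℂ) :
    trB (vecGram M) = ∑ k, M k * (M k)ᴴ := by
  ext i j
  simp only [trB, of_apply, vecGram_apply, Matrix.sum_apply, mul_apply, conjTranspose_apply]
  exact Finset.sum_comm

lemma trA_vecGram {a b : ℕ} (M : K → Matrix (Fin a) (Fin b) ℂ) :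
    trA (vecGram M) = ∑ k, (M k)ᵀ * (M k)ᵀᴴ := by
  ext i j
  simp only [trA, of_apply, vecGram_apply, Matrix.sum_apply, mul_apply, conjTranspose_apply,
    transpose_apply]
  exact Finset.sum_comm

lemma trace_trB {a b : ℕ} (R : Matrix (Fin a × Fin b) (Fin a × Fin b) ℂ) :
    (trB R).trace = R.trace := by
  simp [trace, trB, Fintype.sum_prod_type]

lemma trace_swapM_mul_vecGram {d : ℕ} (M : K → Matrix (Fin d) (Fin d) ℂ) :
    (swapM d * vecGram M).trace = ∑ k, ((M k)ᵀ * (M k)ᴴ).trace := by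
  simp only [trace, diag, mul_apply, swapM, vecGram_apply, Fintype.sum_prod_type, of_apply,
    ite_and, ite_mul, one_mul, zero_mul, Finset.sum_ite_eq, Finset.mem_univ, if_true,
    transpose_apply, conjTranspose_apply]
  rw [Finset.sum_congr rfl fun _ _ => Finset.sum_comm, Finset.sum_comm]

lemma re_trace_CQ_mul_vecGram {d : ℕ} (M : K → Matrix (Fin d) (Fin d) ℂ) :
    (CQ d * vecGram M).trace.re = transportCost M := by
  have htrace : (CQ d * vecGram M).trace = (1 / 2 : ℝ) * ∑ k, ((M k - (M k)ᵀ) * (M k)ᴴ).trace := by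
    rw [CQ, smul_mul, trace_smul, sub_mul, one_mul, trace_sub, ← trace_trB, trB_vecGram, trace_sum,
      trace_swapM_mul_vecGram, ← Finset.sum_sub_distrib]
    simp [sub_mul]
  rw [htrace, Complex.re_ofReal_mul, Complex.re_sum, transportCost]
  simp only [frobenius_norm_sub_transpose_sq, ← Finset.mul_sum]
  ring

lemma image_QCouplings_eq {d : ℕ} {A B : Matrix (Fin d) (Fin d) ℂ} (hA : A.trace = 1) :
    (fun R => (CQ d * R).trace.re) '' QCouplings A B =
      {c | ∃ (r : ℕ) (M : Fin r → Matrix (Fin d) (Fin d) ℂ),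
        HasMarginals M A B ∧ transportCost M = c} := by
  ext c
  constructor
  · rintro ⟨R, ⟨⟨hR, -⟩, hRA, hRB⟩, rfl⟩
    obtain ⟨r, M, rfl⟩ := exists_eq_vecGram hR
    exact ⟨r, M, ⟨trB_vecGram M ▸ hRA, trA_vecGram M ▸ hRB⟩, (re_trace_CQ_mul_vecGram M).symm⟩
  · rintro ⟨r, M, hM, rfl⟩
    have hMA : trB (vecGram M) = A := (trB_vecGram M).trans hM.left
    exact ⟨vecGram M, ⟨⟨vecGram_posSemidef M, by rw [← trace_trB, hMA, hA]⟩, hMA,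
      (trA_vecGram M).trans hM.right⟩, re_trace_CQ_mul_vecGram M⟩

lemma HasMarginals.QOT_eq {d r : ℕ} {M : Fin r → Matrix (Fin d) (Fin d) ℂ}
    {A B : Matrix (Fin d) (Fin d) ℂ} (hM : HasMarginals M A B) (hA : A.trace = 1)
    (hmin : ∀ (s : ℕ) (N : Fin s → Matrix (Fin d) (Fin d) ℂ), HasMarginals N A B →
      transportCost M ≤ transportCost N) :
    QOT (CQ d) A B = transportCost M := by
  rw [QOT, image_QCouplings_eq hA]
  refine IsLeast.csInf_eq ⟨⟨r, M, hM, rfl⟩, ?_⟩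
  rintro _ ⟨s, N, hN, rfl⟩
  exact hmin s N hN

section UnitaryCongruence

lemma transpose_congr (U M : Matrix n n ℂ) : (U * M * Uᵀ)ᵀ = U * Mᵀ * Uᵀ := by
  simp only [transpose_mul, transpose_transpose, Matrix.mul_assoc]

variable [DecidableEq n] {U : Matrix n n ℂ}

lemma mul_conjTranspose_unitary_congr (hU : U ∈ unitaryGroup n ℂ) (M : Matrix n n ℂ) :
    U * M * Uᵀ * (U * M * Uᵀ)ᴴ = U * (M * Mᴴ) * Uᴴ := by
  have hUt : Uᵀ * Uᵀᴴ = 1 := mem_unitaryGroup_iff.mp (transpose_mem_unitaryGroup_iff.mpr hU)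
  calc U * M * Uᵀ * (U * M * Uᵀ)ᴴ = U * M * (Uᵀ * Uᵀᴴ) * Mᴴ * Uᴴ := by
        simp only [conjTranspose_mul, Matrix.mul_assoc]
    _ = U * (M * Mᴴ) * Uᴴ := by rw [hUt, Matrix.mul_one, Matrix.mul_assoc U]

lemma frobenius_norm_unitary_congr (hU : U ∈ unitaryGroup n ℂ) (M : Matrix n n ℂ) :
    ‖U * M * Uᵀ‖ = ‖M‖ := by
  rw [← sq_eq_sq₀ (norm_nonneg _) (norm_nonneg _), frobenius_norm_sq_eq_re_trace,
    frobenius_norm_sq_eq_re_trace, mul_conjTranspose_unitary_congr hU, trace_mul_cycle,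
    ← star_eq_conjTranspose, mem_unitaryGroup_iff'.mp hU, Matrix.one_mul]

lemma transportCost_unitary_congr (hU : U ∈ unitaryGroup n ℂ) (M : K → Matrix n n ℂ) :
    transportCost (fun k => U * M k * Uᵀ) = transportCost M := by
  simp only [transportCost, transpose_congr, ← Matrix.mul_sub, ← Matrix.sub_mul,
    frobenius_norm_unitary_congr hU]

lemma HasMarginals.unitary_congr (hU : U ∈ unitaryGroup n ℂ) {M : K → Matrix n n ℂ}
    {A B : Matrix n n ℂ} (h : HasMarginals M A B) :
    HasMarginals (fun k => U * M k * Uᵀ) (U * A * Uᴴ) (U * B * Uᴴ) where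
  left := by
    simp only [mul_conjTranspose_unitary_congr hU, ← Finset.mul_sum, ← Finset.sum_mul, h.left]
  right := by
    simp only [transpose_congr, mul_conjTranspose_unitary_congr hU, ← Finset.mul_sum,
      ← Finset.sum_mul, h.right]

end UnitaryCongruence

lemma exists_hasMarginals_self {A : Matrix n n ℂ} (hA : A.PosSemidef) :
    ∃ M : Fin 1 → Matrix n n ℂ, HasMarginals M A A ∧ transportCost M = 0 := by
  classical
  set U := hA.isHermitian.eigenvectorUnitary
  set D : Matrix n n ℂ := diagonal fun i => (√(hA.isHermitian.eigenvalues i) : ℂ)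
  have hD : D * Dᴴ = diagonal (RCLike.ofReal ∘ hA.isHermitian.eigenvalues) := by
    simp only [D, diagonal_conjTranspose, diagonal_mul_diagonal]
    congr 1
    ext i
    simp [← Complex.ofReal_mul, Real.mul_self_sqrt (hA.eigenvalues_nonneg i)]
  have hDD : HasMarginals (fun _ : Fin 1 => D) (D * Dᴴ) (D * Dᴴ) :=
    ⟨by simp, by simp [D]⟩
  have hspec : (U : Matrix n n ℂ) * (D * Dᴴ) * (U : Matrix n n ℂ)ᴴ = A := by
    rw [hD]
    exact hA.isHermitian.spectral_theorem.symm
  refine ⟨_, hspec ▸ hDD.unitary_congr U.2, ?_⟩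
  rw [transportCost_unitary_congr U.2]
  simp only [transportCost, D, diagonal_transpose, sub_self, norm_zero]
  simp

end Ensembles

section Amplitude

variable {n : Type*} [Fintype n] {A B : Matrix n n ℂ}

/-- The real quadratic form `v ↦ ⟨v, A v⟩` of a Hermitian matrix; the real part loses
nothing there. -/
def quadForm (A : Matrix n n ℂ) (v : n → ℂ) : ℝ :=
  (star v ⬝ᵥ A *ᵥ v).re

/-- The amplitude `√⟨v, A v⟩` of `A` at `v`; for `A = 1` it is the Euclidean norm of `v`. -/
noncomputable def amplitude (A : Matrix n n ℂ) (v : n → ℂ) : ℝ :=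
  √(quadForm A v)

lemma amplitude_nonneg (A : Matrix n n ℂ) (v : n → ℂ) : 0 ≤ amplitude A v :=
  Real.sqrt_nonneg _

lemma quadForm_nonneg (hA : A.PosSemidef) (v : n → ℂ) : 0 ≤ quadForm A v :=
  (Complex.nonneg_iff.mp (hA.dotProduct_mulVec_nonneg v)).1

lemma sq_amplitude (hA : A.PosSemidef) (v : n → ℂ) : amplitude A v ^ 2 = quadForm A v :=
  Real.sq_sqrt (quadForm_nonneg hA v)

lemma quadForm_conj (A U : Matrix n n ℂ) (v : n → ℂ) :
    quadForm (Uᴴ * A * U) v = quadForm A (U *ᵥ v) := by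
  simp only [quadForm, star_mulVec, ← dotProduct_mulVec, mulVec_mulVec, Matrix.mul_assoc]

lemma amplitude_conj (A U : Matrix n n ℂ) (v : n → ℂ) :
    amplitude (Uᴴ * A * U) v = amplitude A (U *ᵥ v) := by
  rw [amplitude, quadForm_conj, amplitude]

lemma quadForm_single [DecidableEq n] (A : Matrix n n ℂ) (i : n) :
    quadForm A (Pi.single i 1) = (A i i).re := by
  simp [quadForm, Pi.star_single]

lemma quadForm_smul (A : Matrix n n ℂ) (c : ℝ) (v : n → ℂ) :
    quadForm A (c • v) = c ^ 2 * quadForm A v := by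
  simp only [quadForm, star_smul, mulVec_smul, smul_dotProduct, dotProduct_smul, star_trivial,
    Complex.smul_re, smul_eq_mul]
  ring

lemma amplitude_smul (A : Matrix n n ℂ) {c : ℝ} (hc : 0 ≤ c) (v : n → ℂ) :
    amplitude A (c • v) = c * amplitude A v := by
  rw [amplitude, quadForm_smul, Real.sqrt_mul (sq_nonneg c), Real.sqrt_sq hc, amplitude]

lemma continuous_amplitude (A : Matrix n n ℂ) : Continuous (amplitude A) := by
  unfold amplitude quadForm
  fun_prop

lemma amplitude_one_eq_norm [DecidableEq n] (v : n → ℂ) :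
    amplitude 1 v = ‖WithLp.toLp 2 v‖ := by
  rw [amplitude, quadForm, one_mulVec, dotProduct_comm, EuclideanSpace.norm_eq]
  simp [dotProduct, Complex.mul_conj, Complex.sq_norm]

lemma exists_unitary_mulVec_single [DecidableEq n] (i : n) {v : n → ℂ} (hv : amplitude 1 v = 1) :
    ∃ U ∈ unitaryGroup n ℂ, U *ᵥ Pi.single i 1 = v := by
  have hvi : Orthonormal ℂ (Set.domRestrict {i} fun _ : n => WithLp.toLp 2 v) := by
    rw [orthonormal_subsingleton_iff]
    exact fun _ => (amplitude_one_eq_norm v).symm.trans hv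
  obtain ⟨b, hb⟩ := hvi.exists_orthonormalBasis_extension_of_card_eq (by simp)
  refine ⟨_, (EuclideanSpace.basisFun n ℂ).toMatrix_orthonormalBasis_mem_unitary b, ?_⟩
  ext j
  simp [Module.Basis.toMatrix_apply, hb]

lemma ofReal_quadForm (hA : A.PosSemidef) (v : n → ℂ) : (quadForm A v : ℂ) = star v ⬝ᵥ A *ᵥ v :=
  (Complex.eq_re_of_ofReal_le (hA.dotProduct_mulVec_nonneg v)).symm

lemma mulVec_eq_zero_of_amplitude_eq_zero (hA : A.PosSemidef) {v : n → ℂ}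
    (hv : amplitude A v = 0) : A *ᵥ v = 0 := by
  rw [← hA.dotProduct_mulVec_zero_iff, ← ofReal_quadForm hA, ← sq_amplitude hA, hv]
  simp

lemma eq_of_amplitude_eq (hA : A.PosSemidef) (hB : B.PosSemidef)
    (h : ∀ v, amplitude A v = amplitude B v) : A = B := by
  classical
  have hform (v : n → ℂ) : star v ⬝ᵥ (A - B) *ᵥ v = 0 := by
    rw [sub_mulVec, dotProduct_sub, ← ofReal_quadForm hA, ← ofReal_quadForm hB, ← sq_amplitude hA,
      ← sq_amplitude hB, h, sub_self]
  have hsub : (A - B).PosSemidef := posSemidef_iff_dotProduct_mulVec.mpr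
    ⟨hA.isHermitian.sub hB.isHermitian, fun v => (hform v).ge⟩
  refine sub_eq_zero.mp (ext_of_mulVec_single fun i => ?_)
  rw [zero_mulVec, ← hsub.dotProduct_mulVec_zero_iff, hform]

lemma exists_forall_abs_amplitude_sub_le [Nonempty n] [DecidableEq n] (A B : Matrix n n ℂ) :
    ∃ v, amplitude 1 v = 1 ∧ ∀ w,
      |amplitude A w - amplitude B w| ≤ |amplitude A v - amplitude B v| * amplitude 1 w := by
  let gap (x : EuclideanSpace ℂ n) : ℝ := |amplitude A x.ofLp - amplitude B x.ofLp|
  have hgap : Continuous gap := by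
    have := continuous_amplitude A
    have := continuous_amplitude B
    fun_prop
  obtain ⟨x, hx, hmax⟩ := (isCompact_sphere (0 : EuclideanSpace ℂ n) 1).exists_isMaxOn
    (NormedSpace.sphere_nonempty.mpr zero_le_one) hgap.continuousOn
  have hnorm (w : n → ℂ) : amplitude 1 w = ‖WithLp.toLp 2 w‖ := amplitude_one_eq_norm w
  refine ⟨x.ofLp, by simpa [hnorm] using hx, fun w => ?_⟩
  rcases eq_or_ne w 0 with rfl | hw
  · simp [amplitude, quadForm]
  have hr : 0 < amplitude 1 w := by simpa [hnorm] using hw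
  have hunit : WithLp.toLp 2 ((amplitude 1 w)⁻¹ • w) ∈ Metric.sphere 0 1 := by
    rw [mem_sphere_zero_iff_norm, ← hnorm, amplitude_smul 1 (inv_nonneg.mpr hr.le),
      inv_mul_cancel₀ hr.ne']
  have hle : (amplitude 1 w)⁻¹ * |amplitude A w - amplitude B w| ≤ gap x := by
    simpa only [gap, amplitude_smul _ (inv_nonneg.mpr hr.le), ← mul_sub, abs_mul,
      abs_of_pos (inv_pos.mpr hr)] using isMaxOn_iff.mp hmax _ hunit
  rwa [inv_mul_le_iff₀ hr, mul_comm] at hle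

end Amplitude

section LowerBound

open scoped Matrix.Norms.Frobenius

variable {K n : Type*} [Fintype K] [Fintype n] {M : K → Matrix n n ℂ} {A B : Matrix n n ℂ}

lemma two_mul_sum_row_le_of_transpose_eq_neg {S : Matrix n n ℂ} (hS : Sᵀ = -S) (i : n) :
    2 * ∑ j, ‖S i j‖ ^ 2 ≤ ‖S‖ ^ 2 := by
  classical
  have hskew (j : n) : ‖S j i‖ = ‖S i j‖ := by
    rw [show S j i = -S i j from congrFun₂ hS i j, norm_neg]
  have hdiag : ‖S i i‖ ^ 2 = 0 := by
    have hzero : S i i = 0 := self_eq_neg.mp (congrFun₂ hS i i)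
    rw [hzero, norm_zero, zero_pow two_ne_zero]
  calc 2 * ∑ j, ‖S i j‖ ^ 2 = ∑ j, ‖S i j‖ ^ 2 + ∑ a ∈ Finset.univ.erase i, ‖S a i‖ ^ 2 := by
        simp only [two_mul, hskew, Finset.sum_erase (f := fun a => ‖S i a‖ ^ 2) _ hdiag]
    _ ≤ ∑ j, ‖S i j‖ ^ 2 + ∑ a ∈ Finset.univ.erase i, ∑ j, ‖S a j‖ ^ 2 := by
        gcongr with a
        exact Finset.single_le_sum (f := fun j => ‖S a j‖ ^ 2) (fun _ _ => sq_nonneg _)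
          (Finset.mem_univ i)
    _ = ‖S‖ ^ 2 := by
        rw [frobenius_norm_sq,
          Finset.add_sum_erase _ (fun a => ∑ j, ‖S a j‖ ^ 2) (Finset.mem_univ i)]

lemma HasMarginals.amplitude_left_single [DecidableEq n] (h : HasMarginals M A B) (i : n) :
    amplitude A (Pi.single i 1) = ‖WithLp.toLp 2 fun x : K × n => M x.1 i x.2‖ := by
  rw [amplitude, quadForm_single, ← h.left, EuclideanSpace.norm_eq, Fintype.sum_prod_type]
  simp [mul_apply, Matrix.sum_apply, Complex.mul_conj, Complex.sq_norm]

lemma HasMarginals.sq_amplitude_sub_single_le [DecidableEq n] (h : HasMarginals M A B) (i : n) :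
    (amplitude A (Pi.single i 1) - amplitude B (Pi.single i 1)) ^ 2 ≤ 2 * transportCost M := by
  have hskew (k : K) : (M k - (M k)ᵀ)ᵀ = -(M k - (M k)ᵀ) := by
    rw [transpose_sub, transpose_transpose, neg_sub]
  rw [h.amplitude_left_single, h.transpose.amplitude_left_single, ← sq_abs]
  calc _ ≤ ‖WithLp.toLp 2 (fun x : K × n => M x.1 i x.2)
          - WithLp.toLp 2 (fun x : K × n => (M x.1)ᵀ i x.2)‖ ^ 2 := by
        gcongr
        exact abs_norm_sub_norm_le _ _
    _ = ∑ k, ∑ j, ‖(M k - (M k)ᵀ) i j‖ ^ 2 := by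
        rw [← WithLp.toLp_sub, EuclideanSpace.norm_sq_eq, Fintype.sum_prod_type]
        rfl
    _ ≤ ∑ k, ‖M k - (M k)ᵀ‖ ^ 2 / 2 := by
        gcongr with k
        rw [le_div_iff₀' two_pos]
        exact two_mul_sum_row_le_of_transpose_eq_neg (hskew k) i
    _ = 2 * transportCost M := by
        rw [transportCost, ← Finset.sum_div]
        ring

lemma HasMarginals.sq_amplitude_sub_le [DecidableEq n] (h : HasMarginals M A B)
    {v : n → ℂ} (hv : amplitude 1 v = 1) :
    (amplitude A v - amplitude B v) ^ 2 ≤ 2 * transportCost M := by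
  obtain ⟨i⟩ : Nonempty n := by
    by_contra! hempty
    simp [amplitude, quadForm] at hv
  obtain ⟨U, hU, rfl⟩ := exists_unitary_mulVec_single i hv
  have hUstar : Uᴴ ∈ unitaryGroup n ℂ := Unitary.star_mem hU
  have hrot := h.unitary_congr hUstar
  rw [conjTranspose_conjTranspose] at hrot
  rw [← amplitude_conj, ← amplitude_conj, ← transportCost_unitary_congr hUstar]
  exact hrot.sq_amplitude_sub_single_le i

end LowerBound

section Stationarity

variable {n : Type*} [Fintype n] {A B : Matrix n n ℂ}

lemma quadForm_add_smul (hA : A.IsHermitian) (v w : n → ℂ) (t : ℝ) :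
    quadForm A (v + t • w) =
      quadForm A v + t * (2 * (star w ⬝ᵥ A *ᵥ v).re) + t ^ 2 * quadForm A w := by
  have hcross : (star v ⬝ᵥ A *ᵥ w).re = (star w ⬝ᵥ A *ᵥ v).re := by
    rw [star_dotProduct, star_mulVec, ← dotProduct_mulVec, hA.eq, Complex.star_def, Complex.conj_re]
  have hsq : quadForm A (t • w) = t ^ 2 * quadForm A w := quadForm_smul A t w
  simp only [quadForm, star_add, mulVec_add, add_dotProduct, dotProduct_add,
    Complex.add_re] at hsq ⊢
  rw [hsq]
  simp only [star_smul, mulVec_smul, smul_dotProduct, dotProduct_smul, star_trivial,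
    Complex.smul_re, smul_eq_mul, hcross]
  ring

lemma hasDerivAt_amplitude_line (hA : A.IsHermitian) {v : n → ℂ} (hv : 0 < amplitude A v)
    (w : n → ℂ) :
    HasDerivAt (fun t : ℝ => amplitude A (v + t • w))
      ((star w ⬝ᵥ A *ᵥ v).re / amplitude A v) 0 := by
  have hquad : HasDerivAt (fun t : ℝ => quadForm A (v + t • w))
      (2 * (star w ⬝ᵥ A *ᵥ v).re) 0 := by
    simp only [quadForm_add_smul hA]
    convert! ((hasDerivAt_id (0 : ℝ)).mul_const (2 * (star w ⬝ᵥ A *ᵥ v).re)).const_add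
      (quadForm A v) |>.add (((hasDerivAt_id (0 : ℝ)).pow 2).mul_const (quadForm A w)) using 1
    simp
  have hne : quadForm A (v + (0 : ℝ) • w) ≠ 0 := by
    rw [zero_smul, add_zero]
    exact (Real.sqrt_pos.mp hv).ne'
  convert! hquad.sqrt hne using 1
  rw [zero_smul, add_zero, mul_div_mul_left _ _ two_ne_zero, amplitude]

lemma smul_mulVec_sub_of_amplitude_sub_le [DecidableEq n] (hA : A.PosSemidef) (hB : B.PosSemidef)
    {v : n → ℂ} (hv : amplitude 1 v = 1) (hlt : amplitude B v < amplitude A v)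
    (hmax : ∀ w, amplitude A w - amplitude B w ≤
      (amplitude A v - amplitude B v) * amplitude 1 w) :
    amplitude B v • A *ᵥ v - amplitude A v • B *ᵥ v =
      (amplitude A v * amplitude B v * (amplitude A v - amplitude B v)) • v := by
  have hp : 0 < amplitude A v := (amplitude_nonneg B v).trans_lt hlt
  rcases (amplitude_nonneg B v).eq_or_lt with hq | hq
  · simp [← hq, mulVec_eq_zero_of_amplitude_eq_zero hB hq.symm]
  set p := amplitude A v with hpdef
  set q := amplitude B v with hqdef
  set u := q • A *ᵥ v - p • B *ᵥ v - (p * q * (p - q)) • v with hu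
  have hderiv := ((hasDerivAt_amplitude_line hA.isHermitian hp u).sub
    (hasDerivAt_amplitude_line hB.isHermitian hq u)).sub
    ((hasDerivAt_amplitude_line isHermitian_one (hv ▸ one_pos) u).const_mul (p - q))
  have hlocmax : IsLocalMax (fun t : ℝ => amplitude A (v + t • u) - amplitude B (v + t • u) -
      (p - q) * amplitude 1 (v + t • u)) 0 := by
    refine Filter.Eventually.of_forall fun t => ?_
    simpa [hv, ← hpdef, ← hqdef] using hmax (v + t • u)
  have hstat := hlocmax.hasDerivAt_eq_zero hderiv
  rw [hv, one_mulVec, div_one, ← hpdef, ← hqdef] at hstat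
  have hnorm : quadForm 1 u = q * (star u ⬝ᵥ A *ᵥ v).re - p * (star u ⬝ᵥ B *ᵥ v).re -
      p * q * (p - q) * (star u ⬝ᵥ v).re := by
    rw [quadForm, one_mulVec]
    nth_rw 2 [hu]
    simp [dotProduct_sub]
  have hzero : amplitude 1 u = 0 := by
    rw [amplitude, hnorm, Real.sqrt_eq_zero']
    field_simp at hstat
    linarith
  rw [← sub_eq_zero, ← hu, ← one_mulVec u]
  exact mulVec_eq_zero_of_amplitude_eq_zero PosSemidef.one hzero

end Stationarity

section Qubit

/-- The matrix of trace one whose first column is `p (p, z)`. Every qubit density matrix with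
`p² = A 0 0 ≠ 0` has this form. -/
noncomputable def qubitMatrix (p : ℝ) (z : ℂ) : Matrix (Fin 2) (Fin 2) ℂ :=
  !![(p : ℂ) ^ 2, p * star z; p * z, 1 - (p : ℂ) ^ 2]

lemma eq_qubitMatrix {A : Matrix (Fin 2) (Fin 2) ℂ} (hA : IsDensityMatrix A) {z : ℂ}
    (hz : A 1 0 = amplitude A (Pi.single 0 1) * z) :
    A = qubitMatrix (amplitude A (Pi.single 0 1)) z := by
  have hcorner : (amplitude A (Pi.single 0 1) : ℂ) ^ 2 = A 0 0 := by
    rw [← Complex.ofReal_pow, sq_amplitude hA.1, ofReal_quadForm hA.1]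
    simp [Pi.star_single]
  have htrace : A 0 0 + A 1 1 = 1 := by rw [← trace_fin_two, hA.2]
  rw [qubitMatrix, hcorner]
  ext i j
  fin_cases i <;> fin_cases j
  · rfl
  · rw [← hA.1.isHermitian.apply]
    simp [hz]
  · simp [hz]
  · simp [← htrace]

lemma quadForm_qubitMatrix (p r : ℝ) (z : ℂ) :
    quadForm (qubitMatrix p z) ![star z, r] =
      p ^ 2 * ‖z‖ ^ 2 + 2 * p * r * ‖z‖ ^ 2 + (1 - p ^ 2) * r ^ 2 := by
  rw [quadForm, ← Complex.ofReal_re (_ + _)]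
  congr 1
  push_cast
  rw [← Complex.mul_conj']
  simp [qubitMatrix, dotProduct, mulVec, Fin.sum_univ_two, -cons_mulVec]
  ring

lemma sq_amplitude_one_fin_two (z w : ℂ) : amplitude 1 ![z, w] ^ 2 = ‖z‖ ^ 2 + ‖w‖ ^ 2 := by
  rw [amplitude_one_eq_norm, EuclideanSpace.norm_sq_eq]
  simp

lemma nonneg_of_sqrt_sq_add_sub_le {a b k : ℝ} (hb : 0 ≤ b) (hab : b < a) (hk : 0 ≤ b ^ 2 + k)
    (h : √(a ^ 2 + k) - √(b ^ 2 + k) ≤ a - b) : 0 ≤ k := by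
  by_contra! hneg
  have hα : √(a ^ 2 + k) < a := (Real.sqrt_lt' (hb.trans_lt hab)).mpr (by linarith)
  have hβ : √(b ^ 2 + k) ≤ b := Real.sqrt_le_iff.mpr ⟨hb, by linarith⟩
  have hprod : (√(a ^ 2 + k) - √(b ^ 2 + k)) * (√(a ^ 2 + k) + √(b ^ 2 + k)) =
      (a - b) * (a + b) := by
    have := Real.sq_sqrt hk
    have := Real.sq_sqrt (show 0 ≤ a ^ 2 + k by nlinarith)
    linarith
  have : 0 ≤ √(a ^ 2 + k) + √(b ^ 2 + k) := by positivity
  nlinarith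

lemma sum_mul_conjTranspose_eq_qubitMatrix {p q s : ℝ} {z : ℂ}
    (hs : s ^ 2 = 1 - p ^ 2 - q ^ 2 - ‖z‖ ^ 2) :
    !![0, (p : ℂ); (q : ℂ), z] * !![0, (p : ℂ); (q : ℂ), z]ᴴ +
      !![0, 0; 0, (s : ℂ)] * !![0, 0; 0, (s : ℂ)]ᴴ = qubitMatrix p z := by
  have hcorner : (q : ℂ) * q + z * star z + s * s = 1 - p ^ 2 := by
    rw [Complex.star_def, Complex.mul_conj']
    exact_mod_cast (by linarith : q * q + ‖z‖ ^ 2 + s * s = 1 - p ^ 2)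
  ext i j
  fin_cases i <;> fin_cases j
  · simp [qubitMatrix, mul_apply, -cons_mul, ← sq]
  · simp [qubitMatrix, mul_apply, -cons_mul]
  · simp [qubitMatrix, mul_apply, -cons_mul, mul_comm]
  · simpa [qubitMatrix, mul_apply, -cons_mul] using hcorner

open scoped Matrix.Norms.Frobenius in
lemma exists_hasMarginals_qubitMatrix {p q : ℝ} {z : ℂ} (hk : 0 ≤ 1 - p ^ 2 - q ^ 2 - ‖z‖ ^ 2) :
    ∃ M : Fin 2 → Matrix (Fin 2) (Fin 2) ℂ,
      HasMarginals M (qubitMatrix p z) (qubitMatrix q z) ∧ 2 * transportCost M = (p - q) ^ 2 := by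
  have hs := Real.sq_sqrt hk
  set s := √(1 - p ^ 2 - q ^ 2 - ‖z‖ ^ 2)
  refine ⟨![!![0, p; q, z], !![0, 0; 0, s]], ⟨?_, ?_⟩, ?_⟩
  · rw [Fin.sum_univ_two]
    exact sum_mul_conjTranspose_eq_qubitMatrix hs
  · rw [sub_right_comm (1 : ℝ)] at hs
    rw [Fin.sum_univ_two, ← sum_mul_conjTranspose_eq_qubitMatrix hs]
    ext i j
    fin_cases i <;> fin_cases j <;> simp [mul_apply, -cons_mul]
  · simp [transportCost, frobenius_norm_sq, Fin.sum_univ_two, ← Complex.ofReal_sub]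
    ring

lemma nonneg_of_abs_amplitude_qubitMatrix_sub_le {p q : ℝ} {z : ℂ} (hq : 0 ≤ q) (hlt : q < p)
    (hA : (qubitMatrix p z).PosSemidef) (hmax : ∀ w,
      |amplitude (qubitMatrix p z) w - amplitude (qubitMatrix q z) w| ≤ (p - q) * amplitude 1 w) :
    0 ≤ 1 - p ^ 2 - q ^ 2 - ‖z‖ ^ 2 := by
  -- If the remainder vanished, the gap at this vector would be `-(p - q) * amplitude 1 x`, the
  -- other extreme; a negative remainder makes it exceed that bound.
  set x : Fin 2 → ℂ := ![star z, (-(p + q) : ℝ)] with hx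
  set κ := 1 - p ^ 2 - q ^ 2 - ‖z‖ ^ 2
  have hpq : 0 < p + q := by linarith
  have hx_sq : amplitude 1 x ^ 2 = ‖z‖ ^ 2 + (p + q) ^ 2 := by
    rw [hx, sq_amplitude_one_fin_two, norm_star, Complex.norm_real, norm_neg, Real.norm_eq_abs,
      sq_abs]
  have hx_pos : 0 < amplitude 1 x :=
    (amplitude_nonneg 1 x).lt_of_ne' fun h => by nlinarith [sq_nonneg ‖z‖]
  have hAx : quadForm (qubitMatrix p z) x = (q * amplitude 1 x) ^ 2 + (p + q) ^ 2 * κ := by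
    rw [mul_pow, hx_sq, hx, quadForm_qubitMatrix]
    ring
  have hBx : quadForm (qubitMatrix q z) x = (p * amplitude 1 x) ^ 2 + (p + q) ^ 2 * κ := by
    rw [mul_pow, hx_sq, hx, quadForm_qubitMatrix]
    ring
  have hgap : √(quadForm (qubitMatrix q z) x) - √(quadForm (qubitMatrix p z) x) ≤
      p * amplitude 1 x - q * amplitude 1 x := by
    rw [← sub_mul]
    exact (le_abs_self _).trans (abs_sub_comm _ _ |>.trans_le (hmax x))
  have hk : 0 ≤ (p + q) ^ 2 * κ :=
    nonneg_of_sqrt_sq_add_sub_le (mul_nonneg hq hx_pos.le) (mul_lt_mul_of_pos_right hlt hx_pos)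
      (hAx ▸ quadForm_nonneg hA x) (hAx ▸ hBx ▸ hgap)
  exact (mul_nonneg_iff_of_pos_left (by positivity)).mp hk

lemma exists_hasMarginals_of_abs_amplitude_sub_le_single {A B : Matrix (Fin 2) (Fin 2) ℂ}
    (hA : IsDensityMatrix A) (hB : IsDensityMatrix B)
    (hlt : amplitude B (Pi.single 0 1) < amplitude A (Pi.single 0 1))
    (hmax : ∀ w, |amplitude A w - amplitude B w| ≤
      (amplitude A (Pi.single 0 1) - amplitude B (Pi.single 0 1)) * amplitude 1 w) :
    ∃ M : Fin 2 → Matrix (Fin 2) (Fin 2) ℂ, HasMarginals M A B ∧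
      2 * transportCost M = (amplitude A (Pi.single 0 1) - amplitude B (Pi.single 0 1)) ^ 2 := by
  have hunit : amplitude 1 (Pi.single (0 : Fin 2) (1 : ℂ)) = 1 := by
    simp [amplitude, quadForm_single]
  have hstat := congrFun (smul_mulVec_sub_of_amplitude_sub_le hA.1 hB.1 hunit hlt
    fun w => (le_abs_self _).trans (hmax w)) 1
  have hAeq := eq_qubitMatrix (z := A 1 0 / amplitude A (Pi.single 0 1)) hA
  have hBeq := eq_qubitMatrix (z := A 1 0 / amplitude A (Pi.single 0 1)) hB
  have hq := amplitude_nonneg B (Pi.single 0 1)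
  set p := amplitude A (Pi.single 0 1)
  set q := amplitude B (Pi.single 0 1)
  have hp : (p : ℂ) ≠ 0 := Complex.ofReal_ne_zero.mpr (hq.trans_lt hlt).ne'
  have hcol : q * A 1 0 = B 1 0 * p := by
    simpa [sub_eq_zero, mul_comm (B 1 0)] using hstat
  specialize hAeq (mul_div_cancel₀ _ hp).symm
  specialize hBeq (by rw [← mul_div_assoc, hcol, mul_div_cancel_right₀ _ hp])
  generalize A 1 0 / (p : ℂ) = z at hAeq hBeq
  clear_value p q
  subst hAeq hBeq
  exact exists_hasMarginals_qubitMatrix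
    (nonneg_of_abs_amplitude_qubitMatrix_sub_le hq hlt hA.1 hmax)

lemma IsDensityMatrix.unitary_conj {n : Type*} [Fintype n] [DecidableEq n]
    {A U : Matrix n n ℂ} (hA : IsDensityMatrix A) (hU : U ∈ unitaryGroup n ℂ) :
    IsDensityMatrix (Uᴴ * A * U) := by
  refine ⟨hA.1.conjTranspose_mul_mul_same U, ?_⟩
  have hUU : U * Uᴴ = 1 := mem_unitaryGroup_iff.mp hU
  rw [trace_mul_cycle, hUU, Matrix.one_mul, hA.2]

lemma exists_hasMarginals_of_abs_amplitude_sub_le {A B : Matrix (Fin 2) (Fin 2) ℂ}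
    (hA : IsDensityMatrix A) (hB : IsDensityMatrix B) {v : Fin 2 → ℂ} (hv : amplitude 1 v = 1)
    (hlt : amplitude B v < amplitude A v) (hmax : ∀ w,
      |amplitude A w - amplitude B w| ≤ (amplitude A v - amplitude B v) * amplitude 1 w) :
    ∃ M : Fin 2 → Matrix (Fin 2) (Fin 2) ℂ, HasMarginals M A B ∧
      2 * transportCost M = (amplitude A v - amplitude B v) ^ 2 := by
  obtain ⟨U, hU, rfl⟩ := exists_unitary_mulVec_single 0 hv
  have hUU : U * Uᴴ = 1 := mem_unitaryGroup_iff.mp hU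
  have hUU' : Uᴴ * 1 * U = 1 := by rw [Matrix.mul_one]; exact mem_unitaryGroup_iff'.mp hU
  have hconj (C : Matrix (Fin 2) (Fin 2) ℂ) : U * (Uᴴ * C * U) * Uᴴ = C := by
    rw [Matrix.mul_assoc Uᴴ, ← Matrix.mul_assoc U, hUU, Matrix.one_mul, Matrix.mul_assoc, hUU,
      Matrix.mul_one]
  have hnorm (w : Fin 2 → ℂ) : amplitude 1 (U *ᵥ w) = amplitude 1 w := by
    rw [← amplitude_conj, hUU']
  simp only [← amplitude_conj] at hlt ⊢
  obtain ⟨M, hM, hcost⟩ := exists_hasMarginals_of_abs_amplitude_sub_le_single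
    (hA.unitary_conj hU) (hB.unitary_conj hU) hlt fun w => by
      simpa only [amplitude_conj, hnorm] using hmax (U *ᵥ w)
  refine ⟨_, hconj A ▸ hconj B ▸ hM.unitary_congr hU, ?_⟩
  rw [transportCost_unitary_congr hU, hcost]

lemma exists_hasMarginals_two_mul_transportCost_eq {A B : Matrix (Fin 2) (Fin 2) ℂ}
    (hA : IsDensityMatrix A) (hB : IsDensityMatrix B) {v : Fin 2 → ℂ} (hv : amplitude 1 v = 1)
    (hmax : ∀ w,
      |amplitude A w - amplitude B w| ≤ |amplitude A v - amplitude B v| * amplitude 1 w) :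
    ∃ (r : ℕ) (M : Fin r → Matrix (Fin 2) (Fin 2) ℂ), HasMarginals M A B ∧
      2 * transportCost M = (amplitude A v - amplitude B v) ^ 2 := by
  rcases lt_trichotomy (amplitude A v) (amplitude B v) with hlt | heq | hlt
  · rw [abs_sub_comm, abs_of_pos (sub_pos.mpr hlt)] at hmax
    obtain ⟨M, hM, hcost⟩ := exists_hasMarginals_of_abs_amplitude_sub_le hB hA hv hlt
      fun w => (abs_sub_comm _ _).trans_le (hmax w)
    exact ⟨2, _, hM.transpose, by rw [transportCost_transpose, hcost, sub_sq_comm]⟩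
  · have hAB : A = B := eq_of_amplitude_eq hA.1 hB.1 fun w => by
      simpa [heq, sub_eq_zero] using hmax w
    obtain ⟨M, hM, hcost⟩ := exists_hasMarginals_self hA.1
    exact ⟨1, M, hAB ▸ hM, by simp [hcost, hAB]⟩
  · rw [abs_of_pos (sub_pos.mpr hlt)] at hmax
    exact ⟨2, exists_hasMarginals_of_abs_amplitude_sub_le hA hB hv hlt hmax⟩

lemma isGreatest_sqrt_QOT {A B : Matrix (Fin 2) (Fin 2) ℂ}
    (hA : IsDensityMatrix A) (hB : IsDensityMatrix B) :
    IsGreatest ((fun v => |amplitude A v - amplitude B v|) '' {v | amplitude 1 v = 1})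
      (√2 * √(QOT (CQ 2) A B)) := by
  obtain ⟨v, hv, hmax⟩ := exists_forall_abs_amplitude_sub_le A B
  obtain ⟨r, M, hM, hcost⟩ := exists_hasMarginals_two_mul_transportCost_eq hA hB hv hmax
  have hQOT : QOT (CQ 2) A B = transportCost M := hM.QOT_eq hA.2 fun s N hN => by
    linarith [hN.sq_amplitude_sub_le hv]
  rw [← Real.sqrt_mul zero_le_two, hQOT, hcost, Real.sqrt_sq_eq_abs]
  refine ⟨⟨v, hv, rfl⟩, ?_⟩
  rintro _ ⟨w, hw : amplitude 1 w = 1, rfl⟩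
  simpa only [hw, mul_one] using hmax w

end Qubit

section Metric

variable {A B C : Matrix (Fin 2) (Fin 2) ℂ}

lemma sqrt_QOT_comm (hA : IsDensityMatrix A) (hB : IsDensityMatrix B) :
    √(QOT (CQ 2) A B) = √(QOT (CQ 2) B A) := by
  have hAB := isGreatest_sqrt_QOT hA hB
  simp only [abs_sub_comm (amplitude A _)] at hAB
  exact mul_left_cancel₀ (by positivity) (hAB.unique (isGreatest_sqrt_QOT hB hA))

lemma sqrt_QOT_eq_zero_iff (hA : IsDensityMatrix A) (hB : IsDensityMatrix B) :
    √(QOT (CQ 2) A B) = 0 ↔ A = B := by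
  have hmax := isGreatest_sqrt_QOT hA hB
  constructor
  · intro hzero
    rw [hzero, mul_zero] at hmax
    obtain ⟨v, hv, hgap⟩ := exists_forall_abs_amplitude_sub_le A B
    have hv_zero : |amplitude A v - amplitude B v| = 0 :=
      (hmax.2 ⟨v, hv, rfl⟩).antisymm (abs_nonneg _)
    refine eq_of_amplitude_eq hA.1 hB.1 fun w => ?_
    simpa [hv_zero, sub_eq_zero] using hgap w
  · rintro rfl
    obtain ⟨v, -, hv⟩ := hmax.1
    simpa using hv.symm

lemma sqrt_QOT_triangle (hA : IsDensityMatrix A) (hB : IsDensityMatrix B)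
    (hC : IsDensityMatrix C) :
    √(QOT (CQ 2) A C) ≤ √(QOT (CQ 2) A B) + √(QOT (CQ 2) B C) := by
  obtain ⟨v, hv, hAC⟩ := (isGreatest_sqrt_QOT hA hC).1
  refine le_of_mul_le_mul_left ?_ (Real.sqrt_pos.mpr two_pos)
  rw [← hAC, mul_add]
  exact (abs_sub_le _ (amplitude B v) _).trans (add_le_add
    ((isGreatest_sqrt_QOT hA hB).2 ⟨v, hv, rfl⟩) ((isGreatest_sqrt_QOT hB hC).2 ⟨v, hv, rfl⟩))

end Metric

/-- `√(T_{C^Q})` is a metric on qubit density matrices. -/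
theorem sqrt_qot_is_metric_on_qubits :
    (∀ ρA ρB : Matrix (Fin 2) (Fin 2) ℂ, IsDensityMatrix ρA → IsDensityMatrix ρB →
      Real.sqrt (QOT (CQ 2) ρA ρB) = Real.sqrt (QOT (CQ 2) ρB ρA) ∧
      0 ≤ Real.sqrt (QOT (CQ 2) ρA ρB) ∧
      (Real.sqrt (QOT (CQ 2) ρA ρB) = 0 ↔ ρA = ρB)) ∧
    (∀ ρA ρB ρC : Matrix (Fin 2) (Fin 2) ℂ,
      IsDensityMatrix ρA → IsDensityMatrix ρB → IsDensityMatrix ρC →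
      Real.sqrt (QOT (CQ 2) ρA ρC) ≤
        Real.sqrt (QOT (CQ 2) ρA ρB) + Real.sqrt (QOT (CQ 2) ρB ρC)) :=
  ⟨fun _ _ hA hB => ⟨sqrt_QOT_comm hA hB, Real.sqrt_nonneg _, sqrt_QOT_eq_zero_iff hA hB⟩,
    fun _ _ _ hA hB hC => sqrt_QOT_triangle hA hB hC⟩
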